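/- arXiv:2507.16973 — 3 statements merged into one kernel-verified Lean document; each statement's English description precedes it below -/
import Mathlib

section
/- For all ν, δ ∈ ℂ with Re ν > 0 and Re δ > 0, and every z ∈ ℂ with z ≠ 0: J_{ν+δ}(z) = ((z/2)^{ν+δ} / (Γ(ν)·Γ(δ))) · ∑_{s=0}^∞ (z^{2s}/(4^s·(s!)²)) · ∫₀¹ ∫₀¹ u^{ν−1} (1−u)^{δ+s} v^{δ−1} (v−1)^s du dv, where u^{ν−1}, (1−u)^{δ+s}, v^{δ−1} are principal powers of the positive real bases and (v−1)^s is an ordinary natural-number power. -/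
open Complex

/-!
The identity holds term by term in the series. The integrand of the double integral separates, so
the `s`-th double integral is
`(-1)^s B(ν, δ+s+1) B(δ, s+1)`. Euler's formula `B(a, b) = Γ(a) Γ(b) / Γ(a+b)`
(`Complex.betaIntegral_eq_Gamma_mul_div`) makes the factors `Γ(δ+s+1)` cancel, leaving
`(-1)^s Γ(ν) Γ(δ) s! / Γ(ν+δ+s+1)`. Dividing by `Γ(ν) Γ(δ) (s!)^2` gives the coefficient
`(-1)^s / (s! Γ(ν+δ+s+1))` of the series of `J_{ν+δ}`.
-/

/-- Complex Bessel function of the first kind, defined by its series with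
principal complex powers; `1/Γ` is `0` at the poles of `Γ`. -/
noncomputable def besselJ (ν z : ℂ) : ℂ :=
  ∑' s : ℕ, ((-1 : ℂ) ^ s / ((s.factorial : ℂ) * Complex.Gamma (ν + s + 1))) *
    (z / 2) ^ (ν + 2 * s)

lemma double_integral_eq_mul_betaIntegral (ν δ : ℂ) (s : ℕ) :
    (∫ v in (0 : ℝ)..1, ∫ u in (0 : ℝ)..1,
      (u : ℂ) ^ (ν - 1) * ((1 - u : ℝ) : ℂ) ^ (δ + s) *
        (v : ℂ) ^ (δ - 1) * ((v : ℂ) - 1) ^ s) =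
      (-1) ^ s * (betaIntegral ν (δ + s + 1) * betaIntegral δ (s + 1)) := by
  have inner : ∀ v : ℝ, (∫ u in (0 : ℝ)..1,
      (u : ℂ) ^ (ν - 1) * ((1 - u : ℝ) : ℂ) ^ (δ + s) *
        (v : ℂ) ^ (δ - 1) * ((v : ℂ) - 1) ^ s) =
      ((-1) ^ s * betaIntegral ν (δ + s + 1)) *
        ((v : ℂ) ^ (δ - 1) * (1 - (v : ℂ)) ^ ((s : ℂ) + 1 - 1)) := by
    intro v
    have sign : ((v : ℂ) - 1) ^ s = (-1) ^ s * (1 - (v : ℂ)) ^ s := by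
      rw [← mul_pow]; ring
    rw [intervalIntegral.integral_mul_const, intervalIntegral.integral_mul_const, sign,
      add_sub_cancel_right, cpow_natCast, betaIntegral, add_sub_cancel_right]
    push_cast
    ring
  simp_rw [inner]
  rw [intervalIntegral.integral_const_mul, ← betaIntegral]
  ring

lemma double_integral_eq_Gamma (ν δ : ℂ) (hν : 0 < ν.re) (hδ : 0 < δ.re) (s : ℕ) :
    (∫ v in (0 : ℝ)..1, ∫ u in (0 : ℝ)..1,
      (u : ℂ) ^ (ν - 1) * ((1 - u : ℝ) : ℂ) ^ (δ + s) *
        (v : ℂ) ^ (δ - 1) * ((v : ℂ) - 1) ^ s) =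
      (-1) ^ s * (Gamma ν * Gamma δ * s.factorial / Gamma (ν + δ + s + 1)) := by
  have h1 : 0 < (δ + s + 1).re := by simp; positivity
  have h2 : 0 < ((s : ℂ) + 1).re := by simp; positivity
  have hΓ : Gamma (δ + s + 1) ≠ 0 := Gamma_ne_zero_of_re_pos h1
  have hB : betaIntegral ν (δ + s + 1) =
      Gamma ν * Gamma (δ + s + 1) / Gamma (ν + δ + s + 1) := by
    rw [betaIntegral_eq_Gamma_mul_div _ _ hν h1]
    ring_nf
  have hB' : betaIntegral δ (s + 1) = Gamma δ * s.factorial / Gamma (δ + s + 1) := by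
    rw [betaIntegral_eq_Gamma_mul_div _ _ hδ h2, Gamma_nat_eq_factorial, add_assoc]
  rw [double_integral_eq_mul_betaIntegral, hB, hB']
  field_simp

/-- double-integral representation of `J_{ν+δ}(z)`. -/
theorem besselJ_double_integral_rep (ν δ : ℂ) (hν : 0 < ν.re) (hδ : 0 < δ.re)
    (z : ℂ) (hz : z ≠ 0) :
    besselJ (ν + δ) z =
      ((z / 2) ^ (ν + δ) / (Complex.Gamma ν * Complex.Gamma δ)) *
        ∑' s : ℕ, (z ^ (2 * s) / ((4 : ℂ) ^ s * ((s.factorial : ℂ)) ^ 2)) *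
          ∫ v in (0 : ℝ)..1, ∫ u in (0 : ℝ)..1,
            (u : ℂ) ^ (ν - 1) * ((1 - u : ℝ) : ℂ) ^ (δ + s) *
              (v : ℂ) ^ (δ - 1) * ((v : ℂ) - 1) ^ s := by
  rw [besselJ, ← tsum_mul_left]
  refine tsum_congr fun s => ?_
  have hpow : (z / 2) ^ (ν + δ + 2 * s) = (z / 2) ^ (ν + δ) * (z ^ (2 * s) / 4 ^ s) := by
    -- `z ≠ 0` is needed here: `0 ^ (a + b) = 0 ^ a * 0 ^ b` can fail, e.g. for `b = -a ≠ 0`.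
    rw [cpow_add _ _ (div_ne_zero hz two_ne_zero)]
    have : (2 * s : ℂ) = ((2 * s : ℕ) : ℂ) := by push_cast; rfl
    rw [this, cpow_natCast, div_pow, pow_mul 2]
    norm_num
  have hΓν : Gamma ν ≠ 0 := Gamma_ne_zero_of_re_pos hν
  have hΓδ : Gamma δ ≠ 0 := Gamma_ne_zero_of_re_pos hδ
  have hfac : (s.factorial : ℂ) ≠ 0 := by exact_mod_cast s.factorial_ne_zero
  have hΓ : Gamma (ν + δ + s + 1) ≠ 0 :=
    Gamma_ne_zero_of_re_pos (by simp; positivity)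
  rw [double_integral_eq_Gamma ν δ hν hδ, hpow]
  field_simp
end

section
/- For every ν ∈ ℂ with Re ν ≥ −1/2 and every m ∈ ℕ, there exists a constant A > 0 such that for all real x > 0: |x^{−ν} · J_{ν+2m}(x)| ≤ A, where x^{−ν} is the principal power of the positive real base x. -/
/-!
Write `μ = ν + 2m`. On `(0, ∞)` one has `J_μ(x) = (x/2)^μ g_μ(x²/4)` with `g_μ` entire
(`besselG`, `besselJ_eq`), so `|x^{-ν} J_μ(x)| = 2^{-Re μ} x^{2m} |g_μ(x²/4)|`, which is bounded on
`(0, 1]` by continuity of `g_μ`.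

For `x ≥ 1` the argument is an energy estimate. The function `u(x) = x^{μ+1/2} g_μ(x²/4)`, a
constant multiple of `√x J_μ(x)`, solves Bessel's equation in Liouville normal form,
`u'' = -u + c x⁻² u` with `c = μ² - 1/4` (`hasDerivAt_besselU`, `hasDerivAt_besselU'`). Hence
`E = |u|² + |u'|²` satisfies `E' ≤ |c| x⁻² E`, so `E(x) exp(|c| / x)` is nonincreasing and `u` is
bounded on `[1, ∞)` (`besselU_bounded`). Since `|x^{-ν} J_μ(x)| = 2^{-Re μ} x^{-(Re ν + 1/2)} |u(x)|`,
the hypothesis `Re ν ≥ -1/2` finishes the proof.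
-/

open Complex

/-- The Taylor coefficients of `besselG`. -/
noncomputable def besselC (μ : ℂ) (s : ℕ) : ℂ :=
  (-1 : ℂ) ^ s / ((s.factorial : ℂ) * Complex.Gamma (μ + s + 1))

/-- The entire function `g_μ` for which `J_μ(x) = (x/2)^μ g_μ(x²/4)`. -/
noncomputable def besselG (μ t : ℂ) : ℂ := ∑' s : ℕ, besselC μ s * t ^ s

lemma shift_ne_zero {μ : ℂ} (hμ : -1 < μ.re) (s : ℕ) : μ + s + 1 ≠ 0 := by
  intro h
  have := congrArg Complex.re h
  simp at this
  have : (0 : ℝ) ≤ s := s.cast_nonneg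
  linarith

lemma gamma_ne_zero {μ : ℂ} (hμ : -1 < μ.re) (s : ℕ) : Complex.Gamma (μ + s + 1) ≠ 0 := by
  apply Complex.Gamma_ne_zero_of_re_pos
  have : (0 : ℝ) ≤ s := s.cast_nonneg
  simp
  linarith

lemma besselC_ne_zero {μ : ℂ} (hμ : -1 < μ.re) (s : ℕ) : besselC μ s ≠ 0 := by
  have := gamma_ne_zero hμ s
  have := s.factorial_ne_zero
  simp [besselC, *]

lemma besselC_succ (μ : ℂ) (s : ℕ) :
    ((s + 1 : ℕ) : ℂ) * besselC μ (s + 1) = -besselC (μ + 1) s := by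
  have h1 : (s.factorial : ℂ) ≠ 0 := by exact_mod_cast s.factorial_ne_zero
  have h2 : (s : ℂ) + 1 ≠ 0 := by exact_mod_cast s.succ_ne_zero
  have h3 : μ + ((s + 1 : ℕ) : ℂ) + 1 = μ + 1 + s + 1 := by push_cast; ring
  rw [besselC, besselC, h3, Nat.factorial_succ, pow_succ]
  push_cast
  field_simp

lemma besselC_shift {μ : ℂ} (hμ : -1 < μ.re) (s : ℕ) :
    besselC μ s = (μ + s + 1) * besselC (μ + 1) s := by
  have h0 := shift_ne_zero hμ s
  have h1 : (s.factorial : ℂ) ≠ 0 := by exact_mod_cast s.factorial_ne_zero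
  have h2 := gamma_ne_zero hμ s
  have h3 : μ + 1 + s + 1 = (μ + s + 1) + 1 := by ring
  rw [besselC, besselC, h3, Complex.Gamma_add_one _ h0]
  field_simp

lemma besselC_ratio {μ : ℂ} (hμ : -1 < μ.re) (s : ℕ) :
    besselC μ (s + 1) = -besselC μ s / ((s + 1) * (μ + s + 1)) := by
  have h0 := shift_ne_zero hμ s
  have h2 : (s : ℂ) + 1 ≠ 0 := by exact_mod_cast s.succ_ne_zero
  have := besselC_succ μ s
  rw [besselC_shift hμ s, eq_div_iff (mul_ne_zero h2 h0)]
  push_cast at this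
  linear_combination (μ + s + 1) * this

lemma summable_norm_besselG {μ : ℂ} (hμ : -1 < μ.re) (t : ℂ) :
    Summable fun s : ℕ => ‖besselC μ s * t ^ s‖ := by
  rcases eq_or_ne t 0 with rfl | ht
  · apply summable_of_ne_finset_zero (s := {0})
    intro s hs
    simp at hs
    simp [hs]
  refine summable_of_ratio_test_tendsto_lt_one (l := 0) zero_lt_one
    (Filter.Eventually.of_forall fun s => by simp [besselC_ne_zero hμ s, ht]) ?_
  -- The ratio of consecutive terms is at most `|t| / ((Re μ + 1) (s + 1))`.
  have hlim : Filter.Tendsto (fun s : ℕ => (‖t‖ / (μ.re + 1)) * (1 / ((s : ℝ) + 1)))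
      Filter.atTop (nhds 0) := by
    simpa using tendsto_one_div_add_atTop_nhds_zero_nat.const_mul (‖t‖ / (μ.re + 1))
  refine squeeze_zero (fun s => by positivity) (fun s => ?_) hlim
  have hs : (0 : ℝ) ≤ s := s.cast_nonneg
  have hc : 0 < ‖besselC μ s‖ := norm_pos_iff.2 (besselC_ne_zero hμ s)
  have ht' : 0 < ‖t‖ := norm_pos_iff.2 ht
  have h1 : μ.re + 1 ≤ ‖μ + s + 1‖ := by
    refine le_trans ?_ (Complex.re_le_norm _)
    simp
  have h2 : ‖(s : ℂ) + 1‖ = s + 1 := by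
    have : ((s : ℂ) + 1) = ((s + 1 : ℝ) : ℂ) := by push_cast; rfl
    rw [this, Complex.norm_real, Real.norm_of_nonneg (by linarith)]
  have h3 : 0 < μ.re + 1 := by linarith
  have h4 : 0 < ‖μ + s + 1‖ := by linarith
  have h5 : ‖besselC μ (s + 1)‖ = ‖besselC μ s‖ / ((s + 1) * ‖μ + s + 1‖) := by
    rw [besselC_ratio hμ, norm_div, norm_neg, norm_mul, h2]
  have h6 : ∀ n : ℕ, ‖‖besselC μ n * t ^ n‖‖ = ‖besselC μ n‖ * ‖t‖ ^ n := fun n => by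
    rw [norm_norm, norm_mul, norm_pow]
  calc _ = (‖besselC μ (s + 1)‖ * ‖t‖ ^ (s + 1)) / (‖besselC μ s‖ * ‖t‖ ^ s) := by
        rw [← h6, ← h6]
    _ = ‖t‖ / ‖μ + s + 1‖ * (1 / ((s : ℝ) + 1)) := by
        rw [h5]
        field_simp
        ring
    _ ≤ _ := by gcongr

lemma summable_besselG {μ : ℂ} (hμ : -1 < μ.re) (t : ℂ) :
    Summable fun s : ℕ => besselC μ s * t ^ s :=
  (summable_norm_besselG hμ t).of_norm

lemma hasDerivAt_besselG {μ : ℂ} (hμ : -1 < μ.re) (t : ℂ) :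
    HasDerivAt (besselG μ) (-besselG (μ + 1) t) t := by
  have hμ1 : -1 < (μ + 1).re := by simp; linarith
  have key : ∀ (s : ℕ) (y : ℂ), besselC μ (s + 1) * (((s + 1 : ℕ) : ℂ) * y ^ (s + 1 - 1)) =
      -(besselC (μ + 1) s * y ^ s) := fun s y => by
    rw [Nat.add_sub_cancel]
    linear_combination y ^ s * besselC_succ μ s
  set R : ℝ := ‖t‖ + 1 with hR
  have hR0 : 0 < R := by positivity
  have hu : Summable fun s : ℕ => ‖besselC μ s * ((s : ℂ) * (R : ℂ) ^ (s - 1))‖ := by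
    rw [← summable_nat_add_iff 1]
    simp_rw [key, norm_neg]
    exact summable_norm_besselG hμ1 R
  have h := hasDerivAt_tsum_of_isPreconnected (t := Metric.ball (0 : ℂ) R)
    (g := fun s y => besselC μ s * y ^ s)
    (g' := fun s y => besselC μ s * ((s : ℂ) * y ^ (s - 1)))
    hu Metric.isOpen_ball (convex_ball _ _).isPreconnected
    (fun s y _ => (hasDerivAt_pow s y).const_mul _)
    (fun s y hy => by
      have : ‖y‖ ≤ R := by simpa using (Metric.mem_ball.1 hy).le
      simp only [norm_mul, norm_pow, Complex.norm_real, Real.norm_of_nonneg hR0.le]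
      gcongr)
    (y₀ := 0) (by simpa using hR0) (summable_besselG hμ 0)
    (y := t) (by simp [hR])
  refine h.congr_deriv ?_
  have hs : Summable fun s : ℕ => besselC μ s * ((s : ℂ) * t ^ (s - 1)) := by
    rw [← summable_nat_add_iff 1]
    simp_rw [key]
    exact (summable_besselG hμ1 t).neg
  rw [hs.tsum_eq_zero_add]
  simp_rw [key]
  simp [besselG, tsum_neg]

/-- The three-term recurrence for `g_μ`, equivalent to Bessel's differential equation. -/
lemma besselG_contiguous {μ : ℂ} (hμ : -1 < μ.re) (t : ℂ) :
    t * besselG (μ + 2) t = (μ + 1) * besselG (μ + 1) t - besselG μ t := by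
  have hμ1 : -1 < (μ + 1).re := by simp; linarith
  have hμ2 : -1 < (μ + 2).re := by simp; linarith
  have h0 := summable_besselG hμ t
  have h1 := (summable_besselG hμ1 t).mul_left (μ + 1)
  have e : ∀ s : ℕ, (μ + 1) * (besselC (μ + 1) s * t ^ s) - besselC μ s * t ^ s
      = -((s : ℂ) * besselC (μ + 1) s) * t ^ s := fun s => by
    rw [besselC_shift hμ s]; ring
  have e' : ∀ s : ℕ, -(((s + 1 : ℕ) : ℂ) * besselC (μ + 1) (s + 1)) * t ^ (s + 1)
      = t * (besselC (μ + 2) s * t ^ s) := fun s => by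
    rw [besselC_succ, show μ + 1 + 1 = μ + 2 by ring]; ring
  have hs := h1.sub h0
  rw [besselG, besselG, besselG, ← tsum_mul_left, ← tsum_mul_left, ← h1.tsum_sub h0]
  rw [hs.tsum_eq_zero_add]
  simp_rw [e, e']
  simp

lemma besselJ_eq (μ : ℂ) {x : ℝ} (hx : 0 < x) :
    besselJ μ x = ((x / 2 : ℝ) : ℂ) ^ μ * besselG μ ((x ^ 2 / 4 : ℝ) : ℂ) := by
  have h : ((x / 2 : ℝ) : ℂ) ≠ 0 := by exact_mod_cast (by positivity : x / 2 ≠ 0)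
  have h' : (x : ℂ) / 2 = ((x / 2 : ℝ) : ℂ) := by push_cast; rfl
  rw [besselJ, besselG, ← tsum_mul_left]
  refine tsum_congr fun s => ?_
  have e : (2 * (s : ℂ)) = ((2 * s : ℕ) : ℂ) := by push_cast; rfl
  rw [h', Complex.cpow_add _ _ h, e, Complex.cpow_natCast, pow_mul, besselC]
  have : ((x / 2 : ℝ) : ℂ) ^ 2 = ((x ^ 2 / 4 : ℝ) : ℂ) := by push_cast; ring
  rw [this]
  ring

/-- `u(x) = x^{μ+1/2} g_μ(x²/4)`, which is `2^μ √x J_μ(x)` for `x > 0`. -/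
noncomputable def besselU (μ : ℂ) (x : ℝ) : ℂ :=
  (x : ℂ) ^ (μ + 1 / 2) * besselG μ ((x ^ 2 / 4 : ℝ) : ℂ)

/-- The derivative of `besselU μ` on `(0, ∞)`, in closed form. -/
noncomputable def besselU' (μ : ℂ) (x : ℝ) : ℂ :=
  (x : ℂ) ^ (μ + 1 / 2) * ((μ + 1 / 2) / x * besselG μ ((x ^ 2 / 4 : ℝ) : ℂ)
    - x / 2 * besselG (μ + 1) ((x ^ 2 / 4 : ℝ) : ℂ))

lemma hasDerivAt_ofReal_cpow' (k : ℂ) {x : ℝ} (hx : 0 < x) :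
    HasDerivAt (fun y : ℝ => (y : ℂ) ^ k) ((x : ℂ) ^ k * (k / x)) x := by
  have h0 : (x : ℂ) ≠ 0 := by exact_mod_cast hx.ne'
  have h := ((hasDerivAt_id (x : ℂ)).cpow_const (c := k)
    (Or.inl (by simpa using hx))).comp_ofReal
  refine h.congr_deriv ?_
  simp only [id, mul_one]
  rw [Complex.cpow_sub _ _ h0, Complex.cpow_one]
  field_simp

lemma hasDerivAt_besselG_sq {μ : ℂ} (hμ : -1 < μ.re) (x : ℝ) :
    HasDerivAt (fun y : ℝ => besselG μ ((y ^ 2 / 4 : ℝ) : ℂ))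
      (-besselG (μ + 1) ((x ^ 2 / 4 : ℝ) : ℂ) * (x / 2)) x := by
  have h1 : HasDerivAt (fun z : ℂ => z ^ 2 / 4) ((x : ℂ) / 2) (x : ℂ) := by
    refine ((hasDerivAt_pow 2 (x : ℂ)).div_const 4).congr_deriv ?_
    push_cast; ring
  have h := (HasDerivAt.comp (x : ℂ) (hasDerivAt_besselG hμ ((x : ℂ) ^ 2 / 4)) h1).comp_ofReal
  simpa [Function.comp_def] using h

lemma hasDerivAt_besselU {μ : ℂ} (hμ : -1 < μ.re) {x : ℝ} (hx : 0 < x) :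
    HasDerivAt (besselU μ) (besselU' μ x) x := by
  refine ((hasDerivAt_ofReal_cpow' (μ + 1 / 2) hx).mul (hasDerivAt_besselG_sq hμ x)).congr_deriv ?_
  rw [besselU']
  ring

/-- Bessel's equation in Liouville normal form: `u'' = -u + (μ² - 1/4) x⁻² u`. -/
lemma hasDerivAt_besselU' {μ : ℂ} (hμ : -1 < μ.re) {x : ℝ} (hx : 0 < x) :
    HasDerivAt (besselU' μ)
      (-besselU μ x + (1 / x ^ 2 : ℝ) • ((μ ^ 2 - 1 / 4) * besselU μ x)) x := by
  have h0 : (x : ℂ) ≠ 0 := by exact_mod_cast hx.ne'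
  have hμ1 : -1 < (μ + 1).re := by simp; linarith
  have hinv : HasDerivAt (fun y : ℝ => (μ + 1 / 2) / (y : ℂ)) (-(μ + 1 / 2) / x ^ 2) x := by
    have := ((hasDerivAt_inv h0).const_mul (μ + 1 / 2)).comp_ofReal
    simp only [div_eq_mul_inv] at this ⊢
    refine this.congr_deriv ?_
    ring
  have hhalf : HasDerivAt (fun y : ℝ => (y : ℂ) / 2) (1 / 2) x :=
    ((hasDerivAt_id (x : ℂ)).div_const 2).comp_ofReal
  have h := (hasDerivAt_ofReal_cpow' (μ + 1 / 2) hx).mul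
    ((hinv.mul (hasDerivAt_besselG_sq hμ x)).sub (hhalf.mul (hasDerivAt_besselG_sq hμ1 x)))
  refine h.congr_deriv ?_
  simp only [Pi.mul_apply, Pi.sub_apply]
  have hc := besselG_contiguous hμ ((x ^ 2 / 4 : ℝ) : ℂ)
  rw [show μ + 1 + 1 = μ + 2 by ring, besselU, Complex.real_smul]
  generalize besselG μ ((x ^ 2 / 4 : ℝ) : ℂ) = g0 at *
  generalize besselG (μ + 1) ((x ^ 2 / 4 : ℝ) : ℂ) = g1 at *
  generalize besselG (μ + 2) ((x ^ 2 / 4 : ℝ) : ℂ) = g2 at *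
  generalize (x : ℂ) ^ (μ + 1 / 2) = P
  push_cast at hc ⊢
  field_simp
  linear_combination (16 : ℂ) * P * x ^ 2 * hc

/-- The energy estimate `E' ≤ |c| x⁻² E` for `E = |u|² + |u'|²`, integrated over `[1, x]`. -/
lemma besselU_bounded {μ : ℂ} (hμ : -1 < μ.re) :
    ∃ B : ℝ, ∀ x : ℝ, 1 ≤ x → ‖besselU μ x‖ ≤ B := by
  set c : ℂ := μ ^ 2 - 1 / 4 with hc
  set E : ℝ → ℝ := fun x => ‖besselU μ x‖ ^ 2 + ‖besselU' μ x‖ ^ 2 with hE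
  set H : ℝ → ℝ := fun x => E x * Real.exp (‖c‖ / x) with hH
  have hderiv : ∀ x : ℝ, 0 < x → ∃ d ≤ 0, HasDerivAt H d x := by
    intro x hx
    have hu := hasDerivAt_besselU hμ hx
    have hp := hasDerivAt_besselU' hμ hx
    have hexp : HasDerivAt (fun y : ℝ => Real.exp (‖c‖ / y))
        (Real.exp (‖c‖ / x) * (‖c‖ * -(x ^ 2)⁻¹)) x := by
      have := ((hasDerivAt_inv hx.ne').const_mul ‖c‖).exp
      simpa only [div_eq_mul_inv] using this
    refine ⟨_, ?_, (hu.norm_sq.add hp.norm_sq).mul hexp⟩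
    simp only [Pi.add_apply]
    rw [← hc]
    generalize besselU μ x = u
    generalize besselU' μ x = p
    rw [inner_add_right, inner_neg_right, inner_smul_right, real_inner_comm p u]
    have h1 : inner ℝ p (c * u) ≤ ‖p‖ * (‖c‖ * ‖u‖) := by
      simpa using real_inner_le_norm p (c * u)
    have h2 : 2 * inner ℝ p (c * u) ≤ ‖c‖ * (‖u‖ ^ 2 + ‖p‖ ^ 2) := by
      nlinarith [mul_nonneg (norm_nonneg c) (sq_nonneg (‖u‖ - ‖p‖))]
    have h3 : 0 ≤ Real.exp (‖c‖ / x) * (x ^ 2)⁻¹ := by positivity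
    have h4 := mul_le_mul_of_nonneg_left h2 h3
    rw [one_div]
    linarith
  have hanti : AntitoneOn H (Set.Ici 1) := by
    refine antitoneOn_of_deriv_nonpos (convex_Ici 1) (fun x hx => ?_) (fun x hx => ?_)
      (fun x hx => ?_)
    · obtain ⟨d, _, hd⟩ := hderiv x (zero_lt_one.trans_le hx)
      exact hd.continuousAt.continuousWithinAt
    · rw [interior_Ici] at hx
      obtain ⟨d, _, hd⟩ := hderiv x (zero_lt_one.trans hx)
      exact hd.differentiableAt.differentiableWithinAt
    · rw [interior_Ici] at hx
      obtain ⟨d, h0, hd⟩ := hderiv x (zero_lt_one.trans hx)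
      rwa [hd.deriv]
  refine ⟨Real.sqrt (H 1), fun x hx => Real.le_sqrt_of_sq_le ?_⟩
  have h1 : H x ≤ H 1 := hanti Set.self_mem_Ici hx hx
  have h2 : 1 ≤ Real.exp (‖c‖ / x) := Real.one_le_exp (by positivity)
  have h3 : 0 ≤ E x := by positivity
  calc ‖besselU μ x‖ ^ 2 ≤ E x := le_add_of_nonneg_right (by positivity)
    _ ≤ H x := le_mul_of_one_le_right h3 h2
    _ ≤ H 1 := h1

lemma besselG_bounded {μ : ℂ} (hμ : -1 < μ.re) :
    ∃ B : ℝ, ∀ x ∈ Set.Icc (0 : ℝ) 1, ‖besselG μ ((x ^ 2 / 4 : ℝ) : ℂ)‖ ≤ B :=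
  isCompact_Icc.exists_bound_of_continuousOn fun x _ =>
    (hasDerivAt_besselG_sq hμ x).continuousAt.continuousWithinAt

/-- for `Re ν ≥ −1/2` and `m ∈ ℕ`, `x^{−ν}·J_{ν+2m}(x)` is uniformly
bounded on `(0,∞)`. -/
theorem besselJ_uniform_bound (ν : ℂ) (hν : -(1 / 2 : ℝ) ≤ ν.re) (m : ℕ) :
    ∃ A : ℝ, 0 < A ∧ ∀ x : ℝ, 0 < x →
      ‖((x : ℂ) ^ (-ν)) * besselJ (ν + 2 * m) (x : ℂ)‖ ≤ A := by
  set μ : ℂ := ν + 2 * m with hμdef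
  have hre : μ.re = ν.re + 2 * m := by simp [hμdef]
  have hm : (0 : ℝ) ≤ m := m.cast_nonneg
  have hμ : -1 < μ.re := by linarith
  obtain ⟨B, hB⟩ := besselU_bounded hμ
  obtain ⟨C, hC⟩ := besselG_bounded hμ
  set K : ℝ := (1 / 2 : ℝ) ^ μ.re with hK
  have hK0 : 0 < K := by positivity
  refine ⟨K * max B C + 1, ?_, fun x hx => ?_⟩
  · have : 0 ≤ C := (norm_nonneg _).trans (hC 0 (by simp))
    have : 0 ≤ max B C := this.trans (le_max_right _ _)
    positivity
  have hnorm : ‖((x : ℂ) ^ (-ν)) * besselJ μ (x : ℂ)‖ =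
      K * (x ^ (2 * m : ℝ) * ‖besselG μ ((x ^ 2 / 4 : ℝ) : ℂ)‖) := by
    rw [besselJ_eq μ hx, norm_mul, norm_mul, Complex.norm_cpow_eq_rpow_re_of_pos hx,
      Complex.norm_cpow_eq_rpow_re_of_pos (by positivity), div_eq_mul_one_div x 2,
      Real.mul_rpow hx.le (by norm_num), Complex.neg_re,
      show (2 * m : ℝ) = -ν.re + μ.re by rw [hre]; ring, Real.rpow_add hx]
    ring
  rw [hnorm]
  suffices h : x ^ (2 * m : ℝ) * ‖besselG μ ((x ^ 2 / 4 : ℝ) : ℂ)‖ ≤ max B C by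
    have := mul_le_mul_of_nonneg_left h hK0.le
    linarith
  rcases le_total x 1 with h1 | h1
  · refine le_trans ?_ ((hC x ⟨hx.le, h1⟩).trans (le_max_right _ _))
    exact mul_le_of_le_one_left (norm_nonneg _) (Real.rpow_le_one hx.le h1 (by positivity))
  · refine le_trans ?_ ((hB x h1).trans (le_max_left _ _))
    rw [besselU, norm_mul, Complex.norm_cpow_eq_rpow_re_of_pos hx]
    gcongr
    simp only [Complex.add_re, hre]
    norm_num
    linarith
end

section
/- Fix an integer n ≥ 1, a real ε > 0, and a real σ. For every infinitely differentiable f : (0,∞)ⁿ → ℂ with f(ω) = 0 whenever some coordinate ω_i > ε, and every multi-index p ∈ ℕⁿ: T^{σ+1}_p(N_σ f) = T^{σ}_{p+(1,…,1)}(f). In particular, if f ∈ 𝒜_{σ,ε} then N_σ f ∈ 𝒜_{σ+1,ε}, so N_σ maps 𝒜_{σ,ε} into 𝒜_{σ+1,ε} (and this mapping is continuous for the seminorm topologies). -/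
/-!
On the open orthant write `D_i = ω_i⁻¹ ∂_i` and `P = ∏ ω_i`, and let `g = P^(-σ-1/2) f`.
The powers of `P` in the definition of `T^(σ+1)` and of `N_σ` combine to
`P^(-σ-3/2) N_σ f = P⁻¹ ∂₁⋯∂_n g`. Since `ω_j⁻¹` does not depend on `ω_i` for `i ≠ j`, this is
`D₁⋯D_n g` (`foldr_wDeriv_eqOn`). The same remark and the symmetry of second derivatives show that
the `D_i` commute on smooth functions (`wDeriv_comm`), so that
`∏ D_i^(p_i) (D₁⋯D_n g) = ∏ D_i^(p_i+1) g` pointwise on the orthant (`foldr_iterate_succ`),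
which gives the equality of seminorms. Smoothness and vanishing of `N_σ f` hold because
differential operators with smooth coefficients are local and preserve smoothness. All identities
are stated as `Set.EqOn` on the orthant, as nothing is known about the functions outside it.
-/

open Complex MeasureTheory
open scoped ENNReal NNReal

/-- The open positive orthant `(0,∞)ⁿ`. -/
def posOrthant (n : ℕ) : Set (Fin n → ℝ) := {ω | ∀ i, 0 < ω i}

/-- The operator `ω_i⁻¹ ∂/∂ω_i` (partial derivative in the `i`-th coordinate,
divided by `ω_i`). -/
noncomputable def wDeriv (n : ℕ) (i : Fin n) (f : (Fin n → ℝ) → ℂ) :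
    (Fin n → ℝ) → ℂ :=
  fun ω => (ω i)⁻¹ • fderiv ℝ f ω (Pi.single i 1)

/-- The iterated operator `∏_{i=1}^n (ω_i⁻¹ ∂/∂ω_i)^{p_i}`. -/
noncomputable def multiWDeriv (n : ℕ) (p : Fin n → ℕ) (f : (Fin n → ℝ) → ℂ) :
    (Fin n → ℝ) → ℂ :=
  (List.finRange n).foldr (fun i g => (wDeriv n i)^[p i] g) f

/-- Multiplication by the weight `(∏ᵢ ωᵢ)^{−μ−1/2}` (positive real base,
principal power). -/
noncomputable def weightFn (n : ℕ) (μ : ℂ) (f : (Fin n → ℝ) → ℂ) :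
    (Fin n → ℝ) → ℂ :=
  fun ω => (((∏ i, ω i : ℝ) : ℂ) ^ (-μ - 1 / 2)) * f ω

/-- The Zemanian-type seminorm
`T^μ_p(f) = sup_{ω ∈ (0,∞)ⁿ} |∏ᵢ (ωᵢ⁻¹∂ᵢ)^{pᵢ} ((∏ᵢωᵢ)^{−μ−1/2} f(ω))|`. -/
noncomputable def Tsem (n : ℕ) (μ : ℂ) (p : Fin n → ℕ) (f : (Fin n → ℝ) → ℂ) : ℝ≥0∞ :=
  ⨆ ω ∈ posOrthant n, (‖multiWDeriv n p (weightFn n μ f) ω‖₊ : ℝ≥0∞)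

/-- Membership in the testing space `𝒜_{μ,ε}`: smooth on `(0,∞)ⁿ`, vanishing as soon
as some coordinate exceeds `ε`, and all seminorms `T^μ_p` finite. -/
def memA (n : ℕ) (ε : ℝ) (μ : ℂ) (f : (Fin n → ℝ) → ℂ) : Prop :=
  ContDiffOn ℝ (⊤ : ℕ∞) f (posOrthant n) ∧
  (∀ ω ∈ posOrthant n, (∃ i, ε < ω i) → f ω = 0) ∧
  ∀ p : Fin n → ℕ, Tsem n μ p f < ⊤

/-- The partial derivative `∂/∂ω_i`. -/
noncomputable def pDeriv (n : ℕ) (i : Fin n) (f : (Fin n → ℝ) → ℂ) :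
    (Fin n → ℝ) → ℂ :=
  fun ω => fderiv ℝ f ω (Pi.single i 1)

/-- The mixed derivative `∂ⁿ/∂ω₁⋯∂ω_n`. -/
noncomputable def mixedDeriv (n : ℕ) (f : (Fin n → ℝ) → ℂ) : (Fin n → ℝ) → ℂ :=
  (List.finRange n).foldr (fun i g => pDeriv n i g) f

/-- The differential operator
`(N_μ f)(ω) = (∏ᵢωᵢ)^{μ+1/2} ∂ⁿ/∂ω₁⋯∂ω_n ((∏ᵢωᵢ)^{−μ−1/2} f(ω))`. -/
noncomputable def Nop (n : ℕ) (μ : ℂ) (f : (Fin n → ℝ) → ℂ) : (Fin n → ℝ) → ℂ :=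
  fun ω => (((∏ i, ω i : ℝ) : ℂ) ^ (μ + 1 / 2)) * mixedDeriv n (weightFn n μ f) ω

lemma isOpen_posOrthant (n : ℕ) : IsOpen (posOrthant n) := by
  have h : posOrthant n = ⋂ i, {ω : Fin n → ℝ | 0 < ω i} := by
    ext ω; simp [posOrthant]
  rw [h]
  exact isOpen_iInter_of_finite fun i => isOpen_lt continuous_const (continuous_apply i)

lemma pDeriv_congr {n : ℕ} {U : Set (Fin n → ℝ)} (hU : IsOpen U) (i : Fin n)
    {g h : (Fin n → ℝ) → ℂ} (hgh : Set.EqOn g h U) :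
    Set.EqOn (pDeriv n i g) (pDeriv n i h) U := by
  intro ω hω
  simp only [pDeriv]
  rw [(hgh.eventuallyEq_of_mem (hU.mem_nhds hω)).fderiv_eq]

lemma wDeriv_eq_smul_pDeriv {n : ℕ} (i : Fin n) (g : (Fin n → ℝ) → ℂ) (ω : Fin n → ℝ) :
    wDeriv n i g ω = (ω i)⁻¹ • pDeriv n i g ω := rfl

lemma wDeriv_congr {n : ℕ} (i : Fin n) {g h : (Fin n → ℝ) → ℂ}
    (hgh : Set.EqOn g h (posOrthant n)) :
    Set.EqOn (wDeriv n i g) (wDeriv n i h) (posOrthant n) := fun ω hω => by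
  rw [wDeriv_eq_smul_pDeriv, wDeriv_eq_smul_pDeriv,
    pDeriv_congr (isOpen_posOrthant n) i hgh hω]

lemma pDeriv_smooth {n : ℕ} (i : Fin n) {g : (Fin n → ℝ) → ℂ}
    (hg : ContDiffOn ℝ (⊤ : ℕ∞) g (posOrthant n)) :
    ContDiffOn ℝ (⊤ : ℕ∞) (pDeriv n i g) (posOrthant n) := by
  have h := hg.fderiv_of_isOpen (m := ((⊤ : ℕ∞) : WithTop ℕ∞)) (isOpen_posOrthant n) (by simp)
  exact h.clm_apply contDiffOn_const

lemma coord_smooth {n : ℕ} (i : Fin n) :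
    ContDiffOn ℝ (⊤ : ℕ∞) (fun ω : Fin n → ℝ => (ω i)⁻¹) (posOrthant n) :=
  ContDiffOn.inv (contDiff_apply ℝ ℝ i).contDiffOn fun _ hω => (hω i).ne'

lemma wDeriv_smooth {n : ℕ} (i : Fin n) {g : (Fin n → ℝ) → ℂ}
    (hg : ContDiffOn ℝ (⊤ : ℕ∞) g (posOrthant n)) :
    ContDiffOn ℝ (⊤ : ℕ∞) (wDeriv n i g) (posOrthant n) :=
  (coord_smooth i).smul (pDeriv_smooth i hg)

lemma smooth_differentiableAt {n : ℕ} {F : Type*} [NormedAddCommGroup F] [NormedSpace ℝ F]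
    {g : (Fin n → ℝ) → F} (hg : ContDiffOn ℝ (⊤ : ℕ∞) g (posOrthant n)) {ω : Fin n → ℝ}
    (hω : ω ∈ posOrthant n) : DifferentiableAt ℝ g ω :=
  (hg.contDiffAt ((isOpen_posOrthant n).mem_nhds hω)).differentiableAt (by simp)

/-- A factor that does not depend on `ω_i` can be pulled out of `∂_i`. -/
lemma pDeriv_smul_of_invariant {n : ℕ} (i : Fin n) {c : (Fin n → ℝ) → ℝ} {g : (Fin n → ℝ) → ℂ}
    (hc : ContDiffOn ℝ (⊤ : ℕ∞) c (posOrthant n))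
    (hg : ContDiffOn ℝ (⊤ : ℕ∞) g (posOrthant n))
    (hinv : ∀ (ω : Fin n → ℝ) (t : ℝ), c (ω + t • Pi.single i 1) = c ω) :
    Set.EqOn (pDeriv n i (fun ω => c ω • g ω)) (fun ω => c ω • pDeriv n i g ω)
      (posOrthant n) := by
  intro ω hω
  have h1 := (smooth_differentiableAt (hc.smul hg) hω).lineDeriv_eq_fderiv
    (v := (Pi.single i 1 : Fin n → ℝ))
  have h2 := (smooth_differentiableAt hg hω).lineDeriv_eq_fderiv
    (v := (Pi.single i 1 : Fin n → ℝ))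
  change fderiv ℝ (c • g) ω _ = c ω • fderiv ℝ g ω _
  rw [← h1, ← h2]
  simp only [lineDeriv, Pi.smul_apply', hinv]
  exact deriv_fun_const_smul_field _ _

lemma pDeriv_comm {n : ℕ} (i j : Fin n) {g : (Fin n → ℝ) → ℂ}
    (hg : ContDiffOn ℝ (⊤ : ℕ∞) g (posOrthant n)) :
    Set.EqOn (pDeriv n i (pDeriv n j g)) (pDeriv n j (pDeriv n i g)) (posOrthant n) := by
  intro ω hω
  have hfd : DifferentiableAt ℝ (fderiv ℝ g) ω :=
    smooth_differentiableAt
      (hg.fderiv_of_isOpen (m := ((⊤ : ℕ∞) : WithTop ℕ∞)) (isOpen_posOrthant n) (by simp)) hω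
  have key : ∀ a b : Fin n, pDeriv n a (pDeriv n b g) ω =
      fderiv ℝ (fderiv ℝ g) ω (Pi.single a 1) (Pi.single b 1) := by
    intro a b
    change fderiv ℝ (fun x => fderiv ℝ g x (Pi.single b 1)) ω (Pi.single a 1) = _
    rw [fderiv_clm_apply hfd (differentiableAt_const _)]
    simp
  rw [key, key]
  exact (hg.contDiffAt ((isOpen_posOrthant n).mem_nhds hω)).isSymmSndFDerivAt
    (by simpa using WithTop.coe_le_coe.mpr (le_top : (2 : ℕ∞) ≤ ⊤)) _ _

lemma wDeriv_comm {n : ℕ} (i j : Fin n) {g : (Fin n → ℝ) → ℂ}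
    (hg : ContDiffOn ℝ (⊤ : ℕ∞) g (posOrthant n)) :
    Set.EqOn (wDeriv n i (wDeriv n j g)) (wDeriv n j (wDeriv n i g)) (posOrthant n) := by
  rcases eq_or_ne i j with rfl | hij
  · exact fun _ _ => rfl
  have key : ∀ a b : Fin n, a ≠ b → ∀ ω ∈ posOrthant n, wDeriv n a (wDeriv n b g) ω =
      (ω a)⁻¹ • (ω b)⁻¹ • pDeriv n a (pDeriv n b g) ω := by
    intro a b hab ω hω
    rw [wDeriv_eq_smul_pDeriv]
    congr 1
    exact pDeriv_smul_of_invariant a (coord_smooth b) (pDeriv_smooth b hg)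
      (fun ω t => by simp [hab.symm]) hω
  intro ω hω
  rw [key i j hij ω hω, key j i hij.symm ω hω, pDeriv_comm i j hg hω, smul_comm]

lemma iterate_wDeriv_smooth {n : ℕ} (i : Fin n) (k : ℕ) {g : (Fin n → ℝ) → ℂ}
    (hg : ContDiffOn ℝ (⊤ : ℕ∞) g (posOrthant n)) :
    ContDiffOn ℝ (⊤ : ℕ∞) ((wDeriv n i)^[k] g) (posOrthant n) := by
  induction k with
  | zero => exact hg
  | succ k ih => rw [Function.iterate_succ_apply']; exact wDeriv_smooth i ih

lemma iterate_wDeriv_congr {n : ℕ} (i : Fin n) (k : ℕ) {g h : (Fin n → ℝ) → ℂ}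
    (hgh : Set.EqOn g h (posOrthant n)) :
    Set.EqOn ((wDeriv n i)^[k] g) ((wDeriv n i)^[k] h) (posOrthant n) := by
  induction k with
  | zero => exact hgh
  | succ k ih => simp only [Function.iterate_succ_apply']; exact wDeriv_congr i ih

lemma wDeriv_iterate_comm {n : ℕ} (i j : Fin n) (k : ℕ) {g : (Fin n → ℝ) → ℂ}
    (hg : ContDiffOn ℝ (⊤ : ℕ∞) g (posOrthant n)) :
    Set.EqOn (wDeriv n i ((wDeriv n j)^[k] g)) ((wDeriv n j)^[k] (wDeriv n i g))
      (posOrthant n) := by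
  induction k with
  | zero => exact fun _ _ => rfl
  | succ k ih =>
    simp only [Function.iterate_succ_apply']
    exact (wDeriv_comm i j (iterate_wDeriv_smooth j k hg)).trans (wDeriv_congr j ih)

lemma foldr_iterate_smooth {n : ℕ} (p : Fin n → ℕ) (l : List (Fin n)) {g : (Fin n → ℝ) → ℂ}
    (hg : ContDiffOn ℝ (⊤ : ℕ∞) g (posOrthant n)) :
    ContDiffOn ℝ (⊤ : ℕ∞) (l.foldr (fun i g => (wDeriv n i)^[p i] g) g) (posOrthant n) := by
  induction l with
  | nil => exact hg
  | cons i l ih => exact iterate_wDeriv_smooth i (p i) ih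

lemma foldr_iterate_congr {n : ℕ} (p : Fin n → ℕ) (l : List (Fin n)) {g h : (Fin n → ℝ) → ℂ}
    (hgh : Set.EqOn g h (posOrthant n)) :
    Set.EqOn (l.foldr (fun i g => (wDeriv n i)^[p i] g) g)
      (l.foldr (fun i g => (wDeriv n i)^[p i] g) h) (posOrthant n) := by
  induction l with
  | nil => exact hgh
  | cons i l ih => exact iterate_wDeriv_congr i (p i) ih

lemma wDeriv_foldr_comm {n : ℕ} (i : Fin n) (p : Fin n → ℕ) (l : List (Fin n))
    {g : (Fin n → ℝ) → ℂ} (hg : ContDiffOn ℝ (⊤ : ℕ∞) g (posOrthant n)) :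
    Set.EqOn (wDeriv n i (l.foldr (fun i g => (wDeriv n i)^[p i] g) g))
      (l.foldr (fun i g => (wDeriv n i)^[p i] g) (wDeriv n i g)) (posOrthant n) := by
  induction l with
  | nil => exact fun _ _ => rfl
  | cons j l ih =>
    exact (wDeriv_iterate_comm i j (p j) (foldr_iterate_smooth p l hg)).trans
      (iterate_wDeriv_congr j (p j) ih)

lemma foldr_wDeriv_smooth {n : ℕ} (l : List (Fin n)) {g : (Fin n → ℝ) → ℂ}
    (hg : ContDiffOn ℝ (⊤ : ℕ∞) g (posOrthant n)) :
    ContDiffOn ℝ (⊤ : ℕ∞) (l.foldr (wDeriv n) g) (posOrthant n) := by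
  induction l with
  | nil => exact hg
  | cons i l ih => exact wDeriv_smooth i ih

/-- Raising every exponent by one amounts to applying each `D_i` once more, beforehand. -/
lemma foldr_iterate_succ {n : ℕ} (p : Fin n → ℕ) (l : List (Fin n)) {g : (Fin n → ℝ) → ℂ}
    (hg : ContDiffOn ℝ (⊤ : ℕ∞) g (posOrthant n)) :
    Set.EqOn (l.foldr (fun i g => (wDeriv n i)^[p i + 1] g) g)
      (l.foldr (fun i g => (wDeriv n i)^[p i] g) (l.foldr (wDeriv n) g)) (posOrthant n) := by
  induction l with
  | nil => exact fun _ _ => rfl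
  | cons i l ih =>
    simp only [List.foldr_cons, Function.iterate_succ_apply]
    exact iterate_wDeriv_congr i (p i)
      ((wDeriv_congr i ih).trans (wDeriv_foldr_comm i p l (foldr_wDeriv_smooth l hg)))

lemma foldr_pDeriv_smooth {n : ℕ} (l : List (Fin n)) {g : (Fin n → ℝ) → ℂ}
    (hg : ContDiffOn ℝ (⊤ : ℕ∞) g (posOrthant n)) :
    ContDiffOn ℝ (⊤ : ℕ∞) (l.foldr (pDeriv n) g) (posOrthant n) := by
  induction l with
  | nil => exact hg
  | cons i l ih => exact pDeriv_smooth i ih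

lemma listProd_inv_smooth {n : ℕ} (l : List (Fin n)) :
    ContDiffOn ℝ (⊤ : ℕ∞) (fun ω : Fin n → ℝ => (l.map fun i => (ω i)⁻¹).prod)
      (posOrthant n) := by
  induction l with
  | nil => simpa using contDiffOn_const
  | cons i l ih => simpa using (coord_smooth i).mul ih

/-- For distinct indices, the factors `ω_i⁻¹` of the operators `D_i` can be collected in front of
the mixed derivative. -/
lemma foldr_wDeriv_eqOn {n : ℕ} (l : List (Fin n)) (hl : l.Nodup) {g : (Fin n → ℝ) → ℂ}
    (hg : ContDiffOn ℝ (⊤ : ℕ∞) g (posOrthant n)) :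
    Set.EqOn (l.foldr (wDeriv n) g)
      (fun ω => (l.map fun i => (ω i)⁻¹).prod • l.foldr (pDeriv n) g ω) (posOrthant n) := by
  induction l with
  | nil => intro ω _; simp
  | cons i l ih =>
    obtain ⟨hi, hl⟩ := List.nodup_cons.mp hl
    intro ω hω
    simp only [List.foldr_cons, List.map_cons, List.prod_cons]
    rw [wDeriv_congr i (ih hl) hω, wDeriv_eq_smul_pDeriv,
      pDeriv_smul_of_invariant i (listProd_inv_smooth l) (foldr_pDeriv_smooth l hg) _ hω, mul_smul]
    intro ω t
    congr 1
    refine List.map_congr_left fun j hj => ?_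
    have hji : j ≠ i := fun h => hi (h ▸ hj)
    simp [hji]

lemma prod_pos_of_mem {n : ℕ} {ω : Fin n → ℝ} (hω : ω ∈ posOrthant n) : 0 < ∏ i, ω i :=
  Finset.prod_pos fun i _ => hω i

lemma cpow_prod_smooth (n : ℕ) (c : ℂ) :
    ContDiffOn ℝ (⊤ : ℕ∞) (fun ω : Fin n → ℝ => ((∏ i, ω i : ℝ) : ℂ) ^ c) (posOrthant n) := by
  have hP : ContDiffOn ℝ (⊤ : ℕ∞) (fun ω : Fin n → ℝ => ∏ i, ω i) (posOrthant n) :=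
    contDiffOn_prod fun i _ => (contDiff_apply ℝ ℝ i).contDiffOn
  have hL : ContDiffOn ℝ (⊤ : ℕ∞) (fun ω : Fin n → ℝ => ((Real.log (∏ i, ω i) : ℝ) : ℂ))
      (posOrthant n) :=
    Complex.ofRealCLM.contDiff.comp_contDiffOn (hP.log fun ω hω => (prod_pos_of_mem hω).ne')
  refine (hL.mul (contDiffOn_const (c := c))).cexp.congr fun ω hω => ?_
  have h := prod_pos_of_mem hω
  rw [Complex.cpow_def_of_ne_zero (by exact_mod_cast h.ne'), Complex.ofReal_log h.le]

lemma weightFn_smooth {n : ℕ} (μ : ℂ) {f : (Fin n → ℝ) → ℂ}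
    (hf : ContDiffOn ℝ (⊤ : ℕ∞) f (posOrthant n)) :
    ContDiffOn ℝ (⊤ : ℕ∞) (weightFn n μ f) (posOrthant n) :=
  (cpow_prod_smooth n _).mul hf

/-- The weighted function `P^(-μ-3/2) N_μ f` equals `D₁⋯D_n (P^(-μ-1/2) f)`. -/
lemma weightFn_Nop {n : ℕ} (μ : ℂ) {f : (Fin n → ℝ) → ℂ}
    (hf : ContDiffOn ℝ (⊤ : ℕ∞) f (posOrthant n)) :
    Set.EqOn (weightFn n (μ + 1) (Nop n μ f))
      ((List.finRange n).foldr (wDeriv n) (weightFn n μ f)) (posOrthant n) := by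
  intro ω hω
  rw [foldr_wDeriv_eqOn _ (List.nodup_finRange n) (weightFn_smooth μ hf) hω]
  have h : ((∏ i, ω i : ℝ) : ℂ) ≠ 0 := by exact_mod_cast (prod_pos_of_mem hω).ne'
  have hprod : ((List.finRange n).map fun i => (ω i)⁻¹).prod = (∏ i, ω i)⁻¹ := by
    rw [← Finset.prod_inv_distrib, Fin.prod_univ_def]
  simp only [weightFn, Nop, mixedDeriv]
  rw [← mul_assoc, ← Complex.cpow_add _ _ h, hprod, Complex.real_smul,
    show -(μ + 1) - 1 / 2 + (μ + 1 / 2) = -1 by ring, Complex.cpow_neg_one, Complex.ofReal_inv]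

lemma foldr_pDeriv_eqOn_zero {n : ℕ} {U : Set (Fin n → ℝ)} (hU : IsOpen U) (l : List (Fin n))
    {g : (Fin n → ℝ) → ℂ} (hg : Set.EqOn g 0 U) : Set.EqOn (l.foldr (pDeriv n) g) 0 U := by
  induction l with
  | nil => exact hg
  | cons i l ih =>
    intro ω hω
    rw [List.foldr_cons, pDeriv_congr hU i ih hω]
    simp [pDeriv]

lemma Nop_vanish {n : ℕ} {ε : ℝ} (μ : ℂ) {f : (Fin n → ℝ) → ℂ}
    (hvanish : ∀ ω ∈ posOrthant n, (∃ i, ε < ω i) → f ω = 0) :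
    ∀ ω ∈ posOrthant n, (∃ i, ε < ω i) → Nop n μ f ω = 0 := by
  rintro ω hω ⟨i, hi⟩
  have hU : IsOpen (posOrthant n ∩ {ω | ε < ω i}) :=
    (isOpen_posOrthant n).inter (isOpen_lt continuous_const (continuous_apply i))
  have h0 : Set.EqOn (weightFn n μ f) 0 (posOrthant n ∩ {ω | ε < ω i}) := fun x hx => by
    simp [weightFn, hvanish x hx.1 ⟨i, hx.2⟩]
  have h1 : mixedDeriv n (weightFn n μ f) ω = 0 :=
    foldr_pDeriv_eqOn_zero hU (List.finRange n) h0 ⟨hω, hi⟩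
  simp [Nop, h1]

/-- `T^{σ+1}_p(N_σ f) = T^σ_{p+(1,…,1)}(f)`; in particular `N_σ` maps
`𝒜_{σ,ε}` (continuously) into `𝒜_{σ+1,ε}`. -/
theorem Nop_maps_testing_space (n : ℕ) (hn : 1 ≤ n) (ε : ℝ) (hε : 0 < ε) (σ : ℝ)
    (f : (Fin n → ℝ) → ℂ)
    (hf : ContDiffOn ℝ (⊤ : ℕ∞) f (posOrthant n))
    (hvanish : ∀ ω ∈ posOrthant n, (∃ i, ε < ω i) → f ω = 0) :
    (∀ p : Fin n → ℕ,
      Tsem n ((σ : ℂ) + 1) p (Nop n (σ : ℂ) f) = Tsem n (σ : ℂ) (fun i => p i + 1) f) ∧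
    (memA n ε (σ : ℂ) f → memA n ε ((σ : ℂ) + 1) (Nop n (σ : ℂ) f)) := by
  have hT : ∀ p : Fin n → ℕ,
      Tsem n ((σ : ℂ) + 1) p (Nop n (σ : ℂ) f) = Tsem n (σ : ℂ) (fun i => p i + 1) f := by
    intro p
    refine biSup_congr fun ω hω => ?_
    have h : multiWDeriv n p (weightFn n ((σ : ℂ) + 1) (Nop n (σ : ℂ) f)) ω =
        multiWDeriv n (fun i => p i + 1) (weightFn n (σ : ℂ) f) ω :=
      (foldr_iterate_congr p _ (weightFn_Nop (σ : ℂ) hf) hω).trans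
        (foldr_iterate_succ p _ (weightFn_smooth (σ : ℂ) hf) hω).symm
    rw [h]
  refine ⟨hT, fun hA => ⟨?_, Nop_vanish (σ : ℂ) hvanish, fun p => ?_⟩⟩
  · exact (cpow_prod_smooth n _).mul (foldr_pDeriv_smooth _ (weightFn_smooth (σ : ℂ) hf))
  · rw [hT p]
    exact hA.2.2 _
end
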